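/- arXiv:1407.5506 — 3 statements merged into one kernel-verified Lean document; each statement's English description precedes it below -/
import Mathlib

section
/- In the model of superfunctions on Minkowski superspacetime fixed in the context, the supersymmetry generators satisfy, as operators on smooth maps f : ℝ⁴ → Λ: (i) Q_a Q_b + Q_b Q_a = 0 and Q̄_a Q̄_b + Q̄_b Q̄_a = 0 for all a,b ∈ {1,2}; (ii) Q_a Q̄_b + Q̄_b Q_a = 2i Σ_{μ=0}^{3} Γ^μ_{ab} ∂_μ for all a,b ∈ {1,2}; (iii) each Q_a and each Q̄_b commutes with each partial derivative ∂_μ. -/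
noncomputable section

/-- Coordinates of the exterior algebra `Λ = ⋀(ℂ⁴)` with distinguished basis
`θ¹, θ², θ̄¹, θ̄²` (indexed `0,1,2,3`): an element is given by its coefficients on the
basis monomials `θ_S` (`S ⊆ {0,1,2,3}`, factors in increasing index order). -/
abbrev Lam : Type := Finset (Fin 4) → ℂ

/-- The Koszul sign `(−1)^{#{j ∈ S : j < i}}`. -/
def ksign (i : Fin 4) (S : Finset (Fin 4)) : ℂ := (-1 : ℂ) ^ (S.filter (· < i)).card

/-- Left exterior multiplication `e_v` by the `i`-th basis vector, in coordinates. -/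
def eOp (i : Fin 4) (a : Lam) : Lam := fun S =>
  if i ∈ S then ksign i S * a (S.erase i) else 0

/-- The odd derivation `∂_v` dual to the `i`-th basis vector (`∂_v(w) = δ_{v,w}` on basis
vectors, graded Leibniz rule), in coordinates. -/
def dOp (i : Fin 4) (a : Lam) : Lam := fun S =>
  if i ∈ S then 0 else ksign i S * a (insert i S)

/-- The matrices `Γ⁰ = I`, `Γ¹ = diag(1,−1)`, `Γ² = ((0,1),(1,0))`, `Γ³ = ((0,−i),(i,0))`. -/
def Gam : Fin 4 → Matrix (Fin 2) (Fin 2) ℂ :=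
  ![!![1, 0; 0, 1], !![1, 0; 0, -1], !![0, 1; 1, 0], !![0, -Complex.I; Complex.I, 0]]

/-- Index of `θ^a` (for `a ∈ {1,2}`, i.e. `a : Fin 2`). -/
def θi (a : Fin 2) : Fin 4 := ⟨a.val, by have := a.isLt; omega⟩

/-- Index of `θ̄^a` (for `a ∈ {1,2}`, i.e. `a : Fin 2`). -/
def θbi (a : Fin 2) : Fin 4 := ⟨a.val + 2, by have := a.isLt; omega⟩

/-- The partial derivative `∂_μ` of a superfunction `f : ℝ⁴ → Λ`. -/
def pd (μ : Fin 4) (f : (Fin 4 → ℝ) → Lam) : (Fin 4 → ℝ) → Lam :=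
  fun x => fderiv ℝ f x (Pi.single μ 1)

/-- The supersymmetry generator `Q_a = ∂_{θ^a} + i Σ_{μ,b} Γ^μ_{ab} e_{θ̄^b} ∂_μ`. -/
def QOp (a : Fin 2) (f : (Fin 4 → ℝ) → Lam) : (Fin 4 → ℝ) → Lam :=
  fun x => dOp (θi a) (f x) +
    ∑ μ : Fin 4, ∑ b : Fin 2, (Complex.I * Gam μ a b) • eOp (θbi b) (pd μ f x)

/-- The supersymmetry generator `Q̄_b = ∂_{θ̄^b} + i Σ_{μ,a} Γ^μ_{ab} e_{θ^a} ∂_μ`. -/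
def QbOp (b : Fin 2) (f : (Fin 4 → ℝ) → Lam) : (Fin 4 → ℝ) → Lam :=
  fun x => dOp (θbi b) (f x) +
    ∑ μ : Fin 4, ∑ a : Fin 2, (Complex.I * Gam μ a b) • eOp (θi a) (pd μ f x)

/- On smooth maps, composing pointwise with the operators `e_v` and `∂_v` represents their canonical
anticommutation relations by operators that commute with every `∂_μ`, and the `∂_μ` commute with one
another. In the anticommutator of two generators the `∂_v∂_w` and `e_v e_w ∂_μ∂_ν` terms therefore
cancel, and only the cross terms `{∂_v, e_w} ∂_μ = δ_{v,w} ∂_μ` survive. These vanish for two `Q`s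
or two `Q̄`s, which pair unbarred with barred directions; for `Q_a` and `Q̄_b` they contribute
`i Γ^μ_{ab} ∂_μ` twice. -/

open scoped ContDiff

section AntiCommutator

variable (R : Type*) {A ι κ κ' : Type*} [CommSemiring R] [Semiring A] [Algebra R A]
variable [Fintype ι] [Fintype κ] [Fintype κ']

/-- The anticommutator `{x, y} = xy + yx`, as a bilinear map, so that it expands over the sums
defining the supersymmetry generators. -/
def antiCommutator : A →ₗ[R] A →ₗ[R] A := LinearMap.mul R A + (LinearMap.mul R A).flip

theorem antiCommutator_apply (x y : A) : antiCommutator R x y = x * y + y * x := rfl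

theorem antiCommutator_comm (x y : A) : antiCommutator R x y = antiCommutator R y x :=
  add_comm _ _

variable {R}

theorem antiCommutator_map {B : Type*} [Semiring B] [Algebra R B] (φ : A →ₐ[R] B) (x y : A) :
    antiCommutator R (φ x) (φ y) = φ (antiCommutator R x y) := by
  simp only [antiCommutator_apply, map_add, map_mul]

theorem antiCommutator_mul_right {x p : A} (h : Commute p x) (y : A) :
    antiCommutator R x (y * p) = antiCommutator R x y * p := by
  simp only [antiCommutator_apply, add_mul, mul_assoc, h.eq]

theorem antiCommutator_mul_mul {x y p q : A} (hy : Commute p y) (hx : Commute q x)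
    (hpq : Commute p q) :
    antiCommutator R (x * p) (y * q) = antiCommutator R x y * (p * q) := by
  simp only [antiCommutator_apply, add_mul, hy.mul_mul_mul_comm, hx.mul_mul_mul_comm, hpq.eq]

/-- The first-order operator `∑ C^μ_b e_b P_μ` of a supersymmetry generator, for abstract odd
elements `e_b` and momenta `P_μ`. -/
def oddGradient (C : ι → κ → R) (e : κ → A) (P : ι → A) : A := ∑ μ, ∑ b, C μ b • (e b * P μ)

theorem commute_oddGradient {p : A} {e : κ → A} {P : ι → A} (he : ∀ b, Commute p (e b))
    (hP : ∀ μ, Commute p (P μ)) (C : ι → κ → R) : Commute p (oddGradient C e P) :=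
  Commute.sum_right _ _ _ fun μ _ ↦ Commute.sum_right _ _ _ fun b _ ↦
    ((he b).mul_right (hP μ)).smul_right (C μ b)

theorem antiCommutator_oddGradient {D : A} {e : κ → A} {P : ι → A} {δ : κ → R}
    (hP : ∀ μ, Commute (P μ) D) (hδ : ∀ b, antiCommutator R D (e b) = δ b • 1) (C : ι → κ → R) :
    antiCommutator R D (oddGradient C e P) = ∑ μ, (∑ b, C μ b * δ b) • P μ := by
  simp only [oddGradient, map_sum, map_smul, antiCommutator_mul_right (hP _), hδ, smul_mul_assoc,
    one_mul, smul_smul, Finset.sum_smul]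

theorem antiCommutator_oddGradient_oddGradient {e : κ → A} {e' : κ' → A} {P : ι → A}
    (he : ∀ b c, antiCommutator R (e b) (e' c) = 0) (hPe : ∀ μ b, Commute (P μ) (e b))
    (hPe' : ∀ μ b, Commute (P μ) (e' b)) (hPP : ∀ μ ν, Commute (P μ) (P ν))
    (C : ι → κ → R) (C' : ι → κ' → R) :
    antiCommutator R (oddGradient C e P) (oddGradient C' e' P) = 0 := by
  simp only [oddGradient, map_sum, map_smul, LinearMap.sum_apply, LinearMap.smul_apply,
    antiCommutator_mul_mul (hPe' _ _) (hPe _ _) (hPP _ _), he, zero_mul, smul_zero,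
    Finset.sum_const_zero]

theorem antiCommutator_add_oddGradient {D D' : A} {e : κ → A} {e' : κ' → A} {P : ι → A}
    {δ : κ → R} {δ' : κ' → R} (hD : antiCommutator R D D' = 0)
    (he : ∀ b c, antiCommutator R (e b) (e' c) = 0)
    (hδ : ∀ b, antiCommutator R D' (e b) = δ b • 1)
    (hδ' : ∀ b, antiCommutator R D (e' b) = δ' b • 1)
    (hPD : ∀ μ, Commute (P μ) D) (hPD' : ∀ μ, Commute (P μ) D')
    (hPe : ∀ μ b, Commute (P μ) (e b)) (hPe' : ∀ μ b, Commute (P μ) (e' b))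
    (hPP : ∀ μ ν, Commute (P μ) (P ν)) (C : ι → κ → R) (C' : ι → κ' → R) :
    antiCommutator R (D + oddGradient C e P) (D' + oddGradient C' e' P) =
      ∑ μ, (∑ b, C μ b * δ b + ∑ b, C' μ b * δ' b) • P μ := by
  simp only [map_add, LinearMap.add_apply, hD, zero_add,
    antiCommutator_comm R (oddGradient C e P) D', antiCommutator_oddGradient hPD' hδ,
    antiCommutator_oddGradient hPD hδ', add_zero,
    antiCommutator_oddGradient_oddGradient he hPe hPe' hPP, add_smul, Finset.sum_add_distrib]

end AntiCommutator

section CliffordRelations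

theorem ksign_mul_self (i : Fin 4) (S : Finset (Fin 4)) : ksign i S * ksign i S = 1 := by
  rw [ksign, ← mul_pow, neg_one_mul, neg_neg, one_pow]

theorem ksign_insert {i : Fin 4} {S : Finset (Fin 4)} (hi : i ∉ S) (j : Fin 4) :
    ksign j (insert i S) = if i < j then -ksign j S else ksign j S := by
  split_ifs with h <;> simp [ksign, Finset.filter_insert, h, hi, pow_succ]

theorem ksign_erase {i : Fin 4} {S : Finset (Fin 4)} (hi : i ∈ S) (j : Fin 4) :
    ksign j (S.erase i) = if i < j then -ksign j S else ksign j S := by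
  conv_rhs => rw [← Finset.insert_erase hi, ksign_insert (Finset.notMem_erase i S)]
  split_ifs <;> simp

/-- Left exterior multiplication `e_v` as an element of the algebra of endomorphisms of `Λ`. -/
def eEnd (i : Fin 4) : Module.End ℂ Lam where
  toFun := eOp i
  map_add' a b := by ext S; by_cases h : i ∈ S <;> simp [eOp, h, mul_add]
  map_smul' c a := by ext S; by_cases h : i ∈ S <;> simp [eOp, h, mul_left_comm]

/-- The odd derivation `∂_v` as an element of the algebra of endomorphisms of `Λ`. -/
def dEnd (i : Fin 4) : Module.End ℂ Lam where
  toFun := dOp i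
  map_add' a b := by ext S; by_cases h : i ∈ S <;> simp [dOp, h, mul_add]
  map_smul' c a := by ext S; by_cases h : i ∈ S <;> simp [dOp, h, mul_left_comm]

theorem eEnd_apply (i : Fin 4) (a : Lam) (S : Finset (Fin 4)) :
    eEnd i a S = if i ∈ S then ksign i S * a (S.erase i) else 0 := rfl

theorem dEnd_apply (i : Fin 4) (a : Lam) (S : Finset (Fin 4)) :
    dEnd i a S = if i ∈ S then 0 else ksign i S * a (insert i S) := rfl

theorem antiCommutator_eEnd_eEnd (i j : Fin 4) : antiCommutator ℂ (eEnd i) (eEnd j) = 0 := by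
  refine LinearMap.ext fun a ↦ funext fun S ↦ ?_
  rcases eq_or_ne i j with rfl | hij
  · simp [antiCommutator_apply, eEnd_apply]
  rcases hij.lt_or_gt with h | h <;> by_cases hi : i ∈ S <;> by_cases hj : j ∈ S <;>
    simp [antiCommutator_apply, eEnd_apply, ksign_erase, hi, hj, h, h.not_gt, hij, hij.symm,
      Finset.erase_right_comm (a := j) (b := i), mul_left_comm (ksign j S)]

theorem antiCommutator_dEnd_dEnd (i j : Fin 4) : antiCommutator ℂ (dEnd i) (dEnd j) = 0 := by
  refine LinearMap.ext fun a ↦ funext fun S ↦ ?_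
  rcases eq_or_ne i j with rfl | hij
  · simp [antiCommutator_apply, dEnd_apply]
  rcases hij.lt_or_gt with h | h <;> by_cases hi : i ∈ S <;> by_cases hj : j ∈ S <;>
    simp [antiCommutator_apply, dEnd_apply, ksign_insert, hi, hj, h, h.not_gt, hij, hij.symm,
      Finset.insert_comm j i, mul_left_comm (ksign j S)]

theorem antiCommutator_dEnd_eEnd (i j : Fin 4) :
    antiCommutator ℂ (dEnd i) (eEnd j) = (if i = j then 1 else 0 : ℂ) • 1 := by
  refine LinearMap.ext fun a ↦ funext fun S ↦ ?_
  rcases eq_or_ne i j with rfl | hij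
  · by_cases hi : i ∈ S <;>
      simp [antiCommutator_apply, dEnd_apply, eEnd_apply, hi, ksign_insert, ksign_erase,
        ← mul_assoc, ksign_mul_self]
  rcases hij.lt_or_gt with h | h <;> by_cases hi : i ∈ S <;> by_cases hj : j ∈ S <;>
    simp [antiCommutator_apply, dEnd_apply, eEnd_apply, ksign_insert, ksign_erase, hi, hj, h,
      h.not_gt, hij, hij.symm, Finset.erase_insert_of_ne, mul_left_comm (ksign j S)]

end CliffordRelations

section SmoothMaps

variable {E V : Type*} [NormedAddCommGroup E] [NormedSpace ℝ E] [NormedAddCommGroup V]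
variable [NormedSpace ℝ V]

theorem fderiv_fderiv_apply_comm {f : E → V} {x : E} (hf : ContDiffAt ℝ 2 f x) (u v : E) :
    fderiv ℝ (fun y ↦ fderiv ℝ f y v) x u = fderiv ℝ (fun y ↦ fderiv ℝ f y u) x v := by
  have hd : DifferentiableAt ℝ (fderiv ℝ f) x :=
    (hf.fderiv_right (m := 1) (by norm_num)).differentiableAt one_ne_zero
  have hs : IsSymmSndFDerivAt ℝ f x := hf.isSymmSndFDerivAt (by simp)
  simpa [fderiv_clm_apply hd (differentiableAt_const _)] using hs u v

variable [NormedSpace ℂ V] [IsScalarTower ℝ ℂ V]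

variable (E V) in
/-- The complex vector space of smooth maps `E → V`, on which the supersymmetry generators act as
endomorphisms. -/
def smoothMaps : Submodule ℂ (E → V) where
  carrier := {f | ContDiff ℝ ∞ f}
  add_mem' {f g} (hf : ContDiff ℝ ∞ f) (hg : ContDiff ℝ ∞ g) := hf.add hg
  zero_mem' := (contDiff_const : ContDiff ℝ ∞ fun _ : E ↦ (0 : V))
  smul_mem' c f (hf : ContDiff ℝ ∞ f) := hf.const_smul c

theorem smoothMaps.contDiff (f : smoothMaps E V) : ContDiff ℝ ∞ f.1 := f.2

theorem smoothMaps.differentiableAt (f : smoothMaps E V) (x : E) : DifferentiableAt ℝ f.1 x :=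
  (smoothMaps.contDiff f).differentiable (by simp) x

variable (E) in
/-- The action of endomorphisms of `V` on smooth maps `E → V` by pointwise application. -/
def pointwise [FiniteDimensional ℝ V] :
    Module.End ℂ V →ₐ[ℂ] Module.End ℂ (smoothMaps E V) :=
  AlgHom.ofLinearMap
    { toFun L := (L.compLeft E).restrict fun f (hf : ContDiff ℝ ∞ f) ↦
        (L.restrictScalars ℝ).toContinuousLinearMap.contDiff.comp hf
      map_add' _ _ := rfl
      map_smul' _ _ := rfl } rfl fun _ _ ↦ rfl

/-- The derivative in the direction `v`, as an operator on smooth maps. -/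
def directionalDeriv (v : E) : Module.End ℂ (smoothMaps E V) where
  toFun f := ⟨fun x ↦ fderiv ℝ f.1 x v,
    ((smoothMaps.contDiff f).fderiv_right (m := ∞) (by simp)).clm_apply contDiff_const⟩
  map_add' f g := by
    ext x
    simp [fderiv_add (smoothMaps.differentiableAt f x) (smoothMaps.differentiableAt g x)]
  map_smul' c f := by
    ext x
    simp [fderiv_const_smul (smoothMaps.differentiableAt f x)]

theorem commute_directionalDeriv (u v : E) :
    Commute (directionalDeriv u) (directionalDeriv (V := V) v) := by
  ext f x
  have hf : ContDiff ℝ 2 f.1 := (smoothMaps.contDiff f).of_le (WithTop.coe_le_coe.mpr le_top)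
  exact fderiv_fderiv_apply_comm hf.contDiffAt u v

theorem commute_directionalDeriv_pointwise [FiniteDimensional ℝ V] (v : E)
    (L : Module.End ℂ V) : Commute (directionalDeriv v) (pointwise E L) := by
  ext f x
  let L' : V →L[ℝ] V := (L.restrictScalars ℝ).toContinuousLinearMap
  exact congr($((L'.hasFDerivAt.comp x (smoothMaps.differentiableAt f x).hasFDerivAt).fderiv) v)

end SmoothMaps

section Supercharges

variable {κ κ' : Type*} [Fintype κ] [Fintype κ']

/-- Smooth superfunctions `ℝ⁴ → Λ`. -/
abbrev Superfunction : Submodule ℂ ((Fin 4 → ℝ) → Lam) := smoothMaps (Fin 4 → ℝ) Lam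

/-- The partial derivative `∂_μ` as an operator on smooth superfunctions. -/
def pdEnd (μ : Fin 4) : Module.End ℂ Superfunction := directionalDeriv (Pi.single μ 1)

theorem coe_pdEnd_apply (μ : Fin 4) (f : Superfunction) : (pdEnd μ f).1 = pd μ f.1 := rfl

theorem commute_pdEnd_pdEnd (μ ν : Fin 4) : Commute (pdEnd μ) (pdEnd ν) :=
  commute_directionalDeriv _ _

theorem commute_pdEnd_pointwise (μ : Fin 4) (L : Module.End ℂ Lam) :
    Commute (pdEnd μ) (pointwise _ L) :=
  commute_directionalDeriv_pointwise _ L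

/-- The operator `∂_i + ∑_{μ,b} C^μ_b e_{p(b)} ∂_μ` on smooth superfunctions, the common form of the
generators `Q_a` and `Q̄_b`. -/
def supercharge (i : Fin 4) (p : κ → Fin 4) (C : Fin 4 → κ → ℂ) : Module.End ℂ Superfunction :=
  pointwise _ (dEnd i) + oddGradient C (fun b ↦ pointwise _ (eEnd (p b))) pdEnd

theorem coe_supercharge_apply (i : Fin 4) (p : κ → Fin 4) (C : Fin 4 → κ → ℂ)
    (f : Superfunction) :
    (supercharge i p C f).1 =
      fun x ↦ dOp i (f.1 x) + ∑ μ, ∑ b, C μ b • eOp (p b) (pd μ f.1 x) := by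
  ext1 x
  simp only [supercharge, oddGradient, LinearMap.add_apply, LinearMap.sum_apply,
    LinearMap.smul_apply, Submodule.coe_add, AddSubmonoidClass.coe_finsetSum, Pi.add_apply,
    Finset.sum_apply]
  rfl

theorem commute_pdEnd_supercharge (μ i : Fin 4) (p : κ → Fin 4) (C : Fin 4 → κ → ℂ) :
    Commute (pdEnd μ) (supercharge i p C) :=
  (commute_pdEnd_pointwise μ _).add_right <|
    commute_oddGradient (fun _ ↦ commute_pdEnd_pointwise μ _) (commute_pdEnd_pdEnd μ) C

theorem antiCommutator_supercharge (i j : Fin 4) (p : κ → Fin 4) (q : κ' → Fin 4)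
    (C : Fin 4 → κ → ℂ) (C' : Fin 4 → κ' → ℂ) :
    antiCommutator ℂ (supercharge i p C) (supercharge j q C') =
      ∑ μ, (∑ b, C μ b * (if j = p b then 1 else 0) +
        ∑ b, C' μ b * (if i = q b then 1 else 0)) • pdEnd μ := by
  refine antiCommutator_add_oddGradient ?_ (fun b c ↦ ?_) (fun b ↦ ?_) (fun b ↦ ?_)
    (fun μ ↦ commute_pdEnd_pointwise μ _) (fun μ ↦ commute_pdEnd_pointwise μ _)
    (fun μ _ ↦ commute_pdEnd_pointwise μ _) (fun μ _ ↦ commute_pdEnd_pointwise μ _)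
    commute_pdEnd_pdEnd C C'
  · rw [antiCommutator_map, antiCommutator_dEnd_dEnd, map_zero]
  · rw [antiCommutator_map, antiCommutator_eEnd_eEnd, map_zero]
  · rw [antiCommutator_map, antiCommutator_dEnd_eEnd, map_smul, map_one]
  · rw [antiCommutator_map, antiCommutator_dEnd_eEnd, map_smul, map_one]

/-- The generator `Q_a` as an operator on smooth superfunctions. -/
def QEnd (a : Fin 2) : Module.End ℂ Superfunction :=
  supercharge (θi a) θbi fun μ b ↦ Complex.I * Gam μ a b

/-- The generator `Q̄_b` as an operator on smooth superfunctions. -/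
def QbEnd (b : Fin 2) : Module.End ℂ Superfunction :=
  supercharge (θbi b) θi fun μ a ↦ Complex.I * Gam μ a b

theorem coe_QEnd_apply (a : Fin 2) (f : Superfunction) : (QEnd a f).1 = QOp a f.1 :=
  coe_supercharge_apply _ _ _ f

theorem coe_QbEnd_apply (b : Fin 2) (f : Superfunction) : (QbEnd b f).1 = QbOp b f.1 :=
  coe_supercharge_apply _ _ _ f

theorem θi_ne_θbi (a b : Fin 2) : θi a ≠ θbi b := by decide +revert

theorem θi_injective : Function.Injective θi := by decide

theorem θbi_injective : Function.Injective θbi := by decide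

theorem antiCommutator_QEnd_QEnd (a b : Fin 2) : antiCommutator ℂ (QEnd a) (QEnd b) = 0 := by
  simp only [QEnd, antiCommutator_supercharge, θi_ne_θbi, if_false, mul_zero,
    Finset.sum_const_zero, add_zero, zero_smul]

theorem antiCommutator_QbEnd_QbEnd (a b : Fin 2) :
    antiCommutator ℂ (QbEnd a) (QbEnd b) = 0 := by
  simp only [QbEnd, antiCommutator_supercharge, (θi_ne_θbi _ _).symm, if_false, mul_zero,
    Finset.sum_const_zero, add_zero, zero_smul]

theorem antiCommutator_QEnd_QbEnd (a b : Fin 2) :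
    antiCommutator ℂ (QEnd a) (QbEnd b) = ∑ μ, (2 * Complex.I * Gam μ a b) • pdEnd μ := by
  simp only [QEnd, QbEnd, antiCommutator_supercharge, θi_injective.eq_iff, θbi_injective.eq_iff,
    mul_ite, mul_one, mul_zero, Finset.sum_ite_eq, Finset.mem_univ, if_true, ← two_mul, mul_assoc]

end Supercharges

/-- the supersymmetry generators satisfy, on smooth superfunctions
`f : ℝ⁴ → Λ`: (i) `{Q_a, Q_b} = 0` and `{Q̄_a, Q̄_b} = 0`;
(ii) `{Q_a, Q̄_b} = 2i Σ_μ Γ^μ_{ab} ∂_μ`; (iii) each `Q_a`, `Q̄_b` commutes with each `∂_μ`. -/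
theorem stmt8 (f : (Fin 4 → ℝ) → Lam) (hf : ContDiff ℝ (⊤ : ℕ∞) f) :
    -- (i)
    (∀ a b : Fin 2, ∀ x, QOp a (QOp b f) x + QOp b (QOp a f) x = 0) ∧
    (∀ a b : Fin 2, ∀ x, QbOp a (QbOp b f) x + QbOp b (QbOp a f) x = 0) ∧
    -- (ii)
    (∀ a b : Fin 2, ∀ x, QOp a (QbOp b f) x + QbOp b (QOp a f) x =
      ∑ μ : Fin 4, (2 * Complex.I * Gam μ a b) • pd μ f x) ∧
    -- (iii)
    (∀ (a : Fin 2) (μ : Fin 4), ∀ x, QOp a (pd μ f) x = pd μ (QOp a f) x) ∧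
    (∀ (b : Fin 2) (μ : Fin 4), ∀ x, QbOp b (pd μ f) x = pd μ (QbOp b f) x) := by
  obtain ⟨F, rfl⟩ : ∃ F : Superfunction, F.1 = f := ⟨⟨f, hf⟩, rfl⟩
  simp only [← coe_QEnd_apply, ← coe_QbEnd_apply, ← coe_pdEnd_apply]
  refine ⟨fun a b x ↦ congr(($(antiCommutator_QEnd_QEnd a b) F).1 x),
    fun a b x ↦ congr(($(antiCommutator_QbEnd_QbEnd a b) F).1 x), fun a b x ↦ ?_,
    fun a μ x ↦ congr(($((commute_pdEnd_supercharge μ _ _ _).symm.eq) F).1 x),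
    fun b μ x ↦ congr(($((commute_pdEnd_supercharge μ _ _ _).symm.eq) F).1 x)⟩
  have h := congr(($(antiCommutator_QEnd_QbEnd a b) F).1 x)
  rw [LinearMap.sum_apply, AddSubmonoidClass.coe_finsetSum, Finset.sum_apply] at h
  exact h

end
end

section
/- Let W := ⋀(ℂ²) ⊗ ⋀(ℂ²), where the first exterior algebra has distinguished basis τ¹, τ² and the second has distinguished basis τ̄¹, τ̄², and let g_{ab} ∈ ℂ (a,b ∈ {1,2}) be arbitrary constants. For b ∈ {1,2} let e_b be left exterior multiplication by τ̄^b on the second factor, and let i_b be the linear map on the first factor with i_b(1) = 0, i_b(τ^c) = g_{cb} for c ∈ {1,2}, and i_b(τ¹∧τ²) = g_{1b}·τ² − g_{2b}·τ¹. Define d̄_b := Id ⊗ e_b + i_b ⊗ Id ∈ End(W). Then the chiral subspace W_chiral := Ker d̄₁ ∩ Ker d̄₂ consists exactly of the elements f of the form f = (g₁₁g₂₂ − g₂₁g₁₂)φ·(1⊗1) + (g₁₂ψ₁ + g₂₂ψ₂)·(1⊗τ̄¹) + (−g₁₁ψ₁ − g₂₁ψ₂)·(1⊗τ̄²) + F·(1⊗(τ̄¹∧τ̄²))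 − g₂₂φ·(τ¹⊗τ̄¹) + g₂₁φ·(τ¹⊗τ̄²) + g₁₂φ·(τ²⊗τ̄¹) − g₁₁φ·(τ²⊗τ̄²) + ψ₁·(τ¹⊗(τ̄¹∧τ̄²)) + ψ₂·(τ²⊗(τ̄¹∧τ̄²)) + φ·((τ¹∧τ²)⊗(τ̄¹∧τ̄²)) for (uniquely determined) complex numbers φ, ψ₁, ψ₂, F; in particular W_chiral is a 4-dimensional subspace of the 16-dimensional space W. -/
noncomputable section

/-- Coordinates of `W = ⋀(ℂ²) ⊗ ⋀(ℂ²)`, where the first exterior algebra has distinguished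
basis `τ¹, τ²` and the second has distinguished basis `τ̄¹, τ̄²` (both indexed by `Fin 2`):
an element is given by its coefficients on the basis `τ_S ⊗ τ̄_T` (`S, T ⊆ {0,1}`). -/
abbrev W12 : Type := Finset (Fin 2) × Finset (Fin 2) → ℂ

/-- The basis element `τ_S ⊗ τ̄_T` of `W`. -/
def bW (S T : Finset (Fin 2)) : W12 := fun p => if p = (S, T) then 1 else 0

/-- The Koszul sign `(−1)^{#{j ∈ T : j < b}}`. -/
def ksign2 (b : Fin 2) (T : Finset (Fin 2)) : ℂ := (-1 : ℂ) ^ (T.filter (· < b)).card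

/-- `Id ⊗ e_{τ̄^b}`: left exterior multiplication by `τ̄^b` on the second factor. -/
def idTensE (b : Fin 2) (f : W12) : W12 := fun p =>
  if b ∈ p.2 then ksign2 b p.2 * f (p.1, p.2.erase b) else 0

/-- `i_b ⊗ Id`: the map on the first factor with `i_b(1) = 0`, `i_b(τ^c) = g_{cb}` and
`i_b(τ¹∧τ²) = g_{1b}·τ² − g_{2b}·τ¹` (here `g : Fin 2 → Fin 2 → ℂ` is `0`-indexed). -/
def iTensId (g : Fin 2 → Fin 2 → ℂ) (b : Fin 2) (f : W12) : W12 := fun p =>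
  if p.1 = ∅ then g 0 b * f ({0}, p.2) + g 1 b * f ({1}, p.2)
  else if p.1 = {0} then -(g 1 b) * f ({0, 1}, p.2)
  else if p.1 = {1} then g 0 b * f ({0, 1}, p.2)
  else 0

/-- The operator `d̄_b := Id ⊗ e_{τ̄^b} + i_b ⊗ Id` on `W`. -/
def dbarOp (g : Fin 2 → Fin 2 → ℂ) (b : Fin 2) (f : W12) : W12 :=
  fun p => idTensE b f p + iTensId g b f p

/-- The general chiral element of `W` with parameters `φ, ψ₁, ψ₂, F ∈ ℂ`. -/
def chiralElt (g : Fin 2 → Fin 2 → ℂ) (φ ψ₁ ψ₂ F : ℂ) : W12 :=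
  ((g 0 0 * g 1 1 - g 1 0 * g 0 1) * φ) • bW ∅ ∅
  + (g 0 1 * ψ₁ + g 1 1 * ψ₂) • bW ∅ {0}
  + (-(g 0 0) * ψ₁ - g 1 0 * ψ₂) • bW ∅ {1}
  + F • bW ∅ {0, 1}
  + (-(g 1 1) * φ) • bW {0} {0}
  + (g 1 0 * φ) • bW {0} {1}
  + (g 0 1 * φ) • bW {1} {0}
  + (-(g 0 0) * φ) • bW {1} {1}
  + ψ₁ • bW {0} {0, 1}
  + ψ₂ • bW {1} {0, 1}
  + φ • bW {0, 1} {0, 1}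

/-!
Write `f = ∑ f_T ⊗ τ̄_T` with slices `f_T` in the first factor. Then `d̄_b f = 0` says that
`f_{T∖b} = ∓ i_b f_T` for `b ∈ T` and `i_b f_T = 0` for `b ∉ T`. The first kind of equation
expresses every slice through the top one, `h = f_{01}`; the second kind and the two expressions
obtained for `f_∅` are then consistent because `i₀` and `i₁` square to zero and anticommute. Hence
`W_chiral` is the image of the injective linear map sending `h` to
`h ⊗ τ̄⁰ ∧ τ̄¹ + i₁ h ⊗ τ̄⁰ - i₀ h ⊗ τ̄¹ - i₀ i₁ h ⊗ 1`.
Indices run over `{0, 1}` throughout.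
-/

theorem forall_finset_fin_two {P : Finset (Fin 2) → Prop} :
    (∀ S, P S) ↔ P ∅ ∧ P {0} ∧ P {1} ∧ P {0, 1} := by
  refine ⟨fun h => ⟨h _, h _, h _, h _⟩, ?_⟩
  rintro ⟨h_empty, h_zero, h_one, h_pair⟩ S
  have hS : S = ∅ ∨ S = {0} ∨ S = {1} ∨ S = {0, 1} := by
    revert S
    decide
  rcases hS with rfl | rfl | rfl | rfl <;> assumption

/-- The exterior algebra `⋀(R²)` of the plane, an element being given by its coefficients on the
basis `τ_S`, `S ⊆ {0, 1}`; it models the first tensor factor of `W`. -/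
abbrev ExteriorPlane (R : Type*) : Type _ := Finset (Fin 2) → R

namespace ExteriorPlane

variable {R : Type*} [CommRing R]

/-- The coordinates `(φ, ψ₁, ψ₂, F)` of `F + ψ₁ τ⁰ + ψ₂ τ¹ + φ τ⁰ ∧ τ¹`, listed in the order in
which they parametrize chiral elements. -/
def ofCoeffs : R × R × R × R ≃ ExteriorPlane R where
  toFun c S :=
    if S = ∅ then c.2.2.2 else if S = {0} then c.2.1 else if S = {1} then c.2.2.1 else c.1
  invFun x := (x {0, 1}, x {0}, x {1}, x ∅)
  left_inv c := by simp +decide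
  right_inv x := funext (forall_finset_fin_two.2 (by simp +decide))

/-- The interior multiplication by `v`, the antiderivation of `⋀(R²)` sending `τ^c` to `v c`. -/
def interiorMul (v : Fin 2 → R) : ExteriorPlane R →ₗ[R] ExteriorPlane R where
  toFun x S :=
    if S = ∅ then v 0 * x {0} + v 1 * x {1}
    else if S = {0} then -(v 1) * x {0, 1}
    else if S = {1} then v 0 * x {0, 1}
    else 0
  map_add' x y := by
    ext S
    simp only [Pi.add_apply]
    split_ifs <;> ring
  map_smul' r x := by
    ext S
    simp only [Pi.smul_apply, smul_eq_mul, RingHom.id_apply]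
    split_ifs <;> ring

theorem neg_ofCoeffs (c : R × R × R × R) : -ofCoeffs c = ofCoeffs (-c) :=
  funext (forall_finset_fin_two.2 (by simp +decide [ofCoeffs]))

theorem interiorMul_ofCoeffs (v : Fin 2 → R) (φ ψ₁ ψ₂ F : R) :
    interiorMul v (ofCoeffs (φ, ψ₁, ψ₂, F)) =
      ofCoeffs (0, -(v 1) * φ, v 0 * φ, v 0 * ψ₁ + v 1 * ψ₂) := rfl

theorem interiorMul_interiorMul_self (v : Fin 2 → R) (x : ExteriorPlane R) :
    interiorMul v (interiorMul v x) = 0 := by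
  obtain ⟨⟨φ, ψ₁, ψ₂, F⟩, rfl⟩ := ofCoeffs.surjective x
  have h_coeff : v 0 * (-(v 1) * φ) + v 1 * (v 0 * φ) = 0 := by ring
  have h_zero : (0 : ExteriorPlane R) = ofCoeffs (0, 0, 0, 0) := ofCoeffs.symm_apply_eq.1 rfl
  simp only [interiorMul_ofCoeffs, h_coeff, h_zero, mul_zero]

theorem interiorMul_anticomm (v w : Fin 2 → R) (x : ExteriorPlane R) :
    interiorMul v (interiorMul w x) = -interiorMul w (interiorMul v x) := by
  obtain ⟨⟨φ, ψ₁, ψ₂, F⟩, rfl⟩ := ofCoeffs.surjective x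
  have h_coeff : v 0 * (-(w 1) * φ) + v 1 * (w 0 * φ) =
      -(w 0 * (-(v 1) * φ) + w 1 * (v 0 * φ)) := by ring
  simp only [interiorMul_ofCoeffs, neg_ofCoeffs, Prod.neg_mk, h_coeff, mul_zero, neg_zero]

end ExteriorPlane

theorem koszul_system_iff {M F : Type*} [AddGroup M] [FunLike F M M] [AddMonoidHomClass F M M]
    {A B : F} (hA : ∀ x, A (A x) = 0) (hB : ∀ x, B (B x) = 0) (hAB : ∀ x, A (B x) = -B (A x))
    {a b c d : M} :
    ((A a = 0 ∧ a + A b = 0 ∧ A c = 0 ∧ c + A d = 0) ∧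
      (B a = 0 ∧ B b = 0 ∧ a + B c = 0 ∧ -b + B d = 0)) ↔
    a = -A (B d) ∧ b = B d ∧ c = -A d := by
  constructor
  · rintro ⟨⟨-, hab, -, hcd⟩, -, -, -, hbd⟩
    have hb : b = B d := neg_add_eq_zero.1 hbd
    exact ⟨hb ▸ eq_neg_of_add_eq_zero_left hab, hb, eq_neg_of_add_eq_zero_left hcd⟩
  · rintro ⟨rfl, rfl, rfl⟩
    simp [hA, hB, hAB]

namespace W12

open ExteriorPlane

variable (g : Fin 2 → Fin 2 → ℂ)

/-- The slice `f_T` of `f = ∑ f_T ⊗ τ̄_T`, an element of the first tensor factor. -/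
def slice (f : W12) (T : Finset (Fin 2)) : ExteriorPlane ℂ := fun S => f (S, T)

theorem slice_dbarOp (b : Fin 2) (f : W12) (T : Finset (Fin 2)) :
    slice (dbarOp g b f) T =
      (if b ∈ T then ksign2 b T • slice f (T.erase b) else 0) +
        interiorMul (g · b) (slice f T) := by
  ext S
  by_cases hb : b ∈ T <;> simp [slice, dbarOp, idTensE, iTensId, interiorMul, hb]

theorem slice_ext_iff {f f' : W12} : f = f' ↔ ∀ T, slice f T = slice f' T :=
  ⟨fun h _ => h ▸ rfl, fun h => funext fun p => congrFun (h p.2) p.1⟩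

theorem dbarOp_eq_zero_iff (b : Fin 2) (f : W12) :
    dbarOp g b f = 0 ↔ ∀ T, (if b ∈ T then ksign2 b T • slice f (T.erase b) else 0) +
      interiorMul (g · b) (slice f T) = 0 := by
  simp only [slice_ext_iff, slice_dbarOp]
  rfl

theorem dbarOp_zero_eq_zero_iff (f : W12) :
    dbarOp g 0 f = 0 ↔
      interiorMul (g · 0) (slice f ∅) = 0 ∧
      slice f ∅ + interiorMul (g · 0) (slice f {0}) = 0 ∧
      interiorMul (g · 0) (slice f {1}) = 0 ∧
      slice f {1} + interiorMul (g · 0) (slice f {0, 1}) = 0 := by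
  have h_erase : ({0, 1} : Finset (Fin 2)).erase 0 = {1} := by decide
  have h_sign (T) : ksign2 0 T = 1 := by simp [ksign2]
  simp [dbarOp_eq_zero_iff, forall_finset_fin_two, h_erase, h_sign]

theorem dbarOp_one_eq_zero_iff (f : W12) :
    dbarOp g 1 f = 0 ↔
      interiorMul (g · 1) (slice f ∅) = 0 ∧
      interiorMul (g · 1) (slice f {0}) = 0 ∧
      slice f ∅ + interiorMul (g · 1) (slice f {1}) = 0 ∧
      -slice f {0} + interiorMul (g · 1) (slice f {0, 1}) = 0 := by
  have h_erase : ({0, 1} : Finset (Fin 2)).erase 1 = {0} := by decide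
  have h_sign_one : ksign2 1 {1} = 1 := by simp [ksign2, Finset.filter_singleton]
  have h_sign_pair : ksign2 1 {0, 1} = -1 := by
    have h_card : (({0, 1} : Finset (Fin 2)).filter (· < 1)).card = 1 := by decide
    rw [ksign2, h_card, pow_one]
  simp [dbarOp_eq_zero_iff, forall_finset_fin_two, h_erase, h_sign_one, h_sign_pair]

/-- The parametrization of `W_chiral` by the top slice `h`, namely `h ↦ exp(K) (h ⊗ τ̄⁰ ∧ τ̄¹)` for
`K = -∑ i_b ⊗ ∂_b`, with `∂_b` the interior derivative dual to `τ̄^b`. -/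
def chiralLift : ExteriorPlane ℂ →ₗ[ℂ] W12 :=
  LinearMap.pi fun p => LinearMap.proj p.1 ∘ₗ
    if p.2 = ∅ then -(interiorMul (g · 0) ∘ₗ interiorMul (g · 1))
    else if p.2 = {0} then interiorMul (g · 1)
    else if p.2 = {1} then -interiorMul (g · 0)
    else LinearMap.id

@[simp]
theorem slice_chiralLift_empty (h : ExteriorPlane ℂ) :
    slice (chiralLift g h) ∅ = -interiorMul (g · 0) (interiorMul (g · 1) h) := rfl

@[simp]
theorem slice_chiralLift_zero (h : ExteriorPlane ℂ) :
    slice (chiralLift g h) {0} = interiorMul (g · 1) h := rfl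

@[simp]
theorem slice_chiralLift_one (h : ExteriorPlane ℂ) :
    slice (chiralLift g h) {1} = -interiorMul (g · 0) h := rfl

@[simp]
theorem slice_chiralLift_pair (h : ExteriorPlane ℂ) :
    slice (chiralLift g h) {0, 1} = h := rfl

theorem chiralLift_injective : Function.Injective (chiralLift g) :=
  Function.LeftInverse.injective (g := (slice · {0, 1})) (slice_chiralLift_pair g)

theorem eq_chiralLift_slice_iff {f : W12} :
    f = chiralLift g (slice f {0, 1}) ↔
      slice f ∅ = -interiorMul (g · 0) (interiorMul (g · 1) (slice f {0, 1})) ∧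
      slice f {0} = interiorMul (g · 1) (slice f {0, 1}) ∧
      slice f {1} = -interiorMul (g · 0) (slice f {0, 1}) := by
  rw [slice_ext_iff, forall_finset_fin_two]
  simp

theorem dbarOp_eq_zero_iff_mem_range_chiralLift {f : W12} :
    (dbarOp g 0 f = 0 ∧ dbarOp g 1 f = 0) ↔ f ∈ LinearMap.range (chiralLift g) := by
  have h_mem : f ∈ LinearMap.range (chiralLift g) ↔ f = chiralLift g (slice f {0, 1}) := by
    refine ⟨?_, fun hf => ⟨_, hf.symm⟩⟩
    rintro ⟨h, rfl⟩
    rw [slice_chiralLift_pair]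
  rw [h_mem, eq_chiralLift_slice_iff, dbarOp_zero_eq_zero_iff, dbarOp_one_eq_zero_iff]
  exact koszul_system_iff (interiorMul_interiorMul_self _) (interiorMul_interiorMul_self _)
    (interiorMul_anticomm _ _)

theorem slice_chiralElt (φ ψ₁ ψ₂ F : ℂ) :
    slice (chiralElt g φ ψ₁ ψ₂ F) ∅ =
        ofCoeffs (0, 0, 0, (g 0 0 * g 1 1 - g 1 0 * g 0 1) * φ) ∧
      slice (chiralElt g φ ψ₁ ψ₂ F) {0} =
        ofCoeffs (0, -(g 1 1) * φ, g 0 1 * φ, g 0 1 * ψ₁ + g 1 1 * ψ₂) ∧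
      slice (chiralElt g φ ψ₁ ψ₂ F) {1} =
        ofCoeffs (0, g 1 0 * φ, -(g 0 0) * φ, -(g 0 0) * ψ₁ - g 1 0 * ψ₂) ∧
      slice (chiralElt g φ ψ₁ ψ₂ F) {0, 1} = ofCoeffs (φ, ψ₁, ψ₂, F) := by
  refine ⟨?_, ?_, ?_, ?_⟩ <;>
    refine funext (forall_finset_fin_two.2 ?_) <;>
    simp +decide [slice, chiralElt, bW, ofCoeffs]

theorem chiralElt_eq_chiralLift (φ ψ₁ ψ₂ F : ℂ) :
    chiralElt g φ ψ₁ ψ₂ F = chiralLift g (ofCoeffs (φ, ψ₁, ψ₂, F)) := by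
  obtain ⟨h_empty, h_zero, h_one, h_pair⟩ := slice_chiralElt g φ ψ₁ ψ₂ F
  refine slice_ext_iff.2 (forall_finset_fin_two.2 ⟨?_, ?_, ?_, ?_⟩)
  · have h_det : -(g 0 0 * (-(g 1 1) * φ) + g 1 0 * (g 0 1 * φ)) =
        (g 0 0 * g 1 1 - g 1 0 * g 0 1) * φ := by ring
    simp only [h_empty, slice_chiralLift_empty, interiorMul_ofCoeffs, neg_ofCoeffs, Prod.neg_mk,
      h_det, mul_zero, neg_zero]
  · rw [h_zero, slice_chiralLift_zero, interiorMul_ofCoeffs]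
  · have h_coeff : -(g 0 0 * ψ₁ + g 1 0 * ψ₂) = -(g 0 0) * ψ₁ - g 1 0 * ψ₂ := by ring
    simp only [h_one, slice_chiralLift_one, interiorMul_ofCoeffs, neg_ofCoeffs, Prod.neg_mk,
      h_coeff, neg_zero, neg_mul, neg_neg]
  · rw [h_pair, slice_chiralLift_pair]

end W12

/-- the chiral subspace `W_chiral = Ker d̄₁ ∩ Ker d̄₂` of
`W = ⋀(ℂ²) ⊗ ⋀(ℂ²)` consists exactly of the elements `chiralElt g φ ψ₁ ψ₂ F` for uniquely
determined complex numbers `φ, ψ₁, ψ₂, F`; in particular `W_chiral` is a `4`-dimensional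
subspace of the `16`-dimensional space `W`. -/
theorem stmt12 (g : Fin 2 → Fin 2 → ℂ) :
    -- the characterization of the chiral subspace
    (∀ f : W12, (dbarOp g 0 f = 0 ∧ dbarOp g 1 f = 0) ↔
      ∃! c : ℂ × ℂ × ℂ × ℂ, f = chiralElt g c.1 c.2.1 c.2.2.1 c.2.2.2) ∧
    -- `W` is 16-dimensional
    Module.finrank ℂ W12 = 16 ∧
    -- `W_chiral` is a 4-dimensional subspace
    (∃ v : Fin 4 → W12, LinearIndependent ℂ v ∧
      ∀ f : W12, (dbarOp g 0 f = 0 ∧ dbarOp g 1 f = 0) ↔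
        f ∈ Submodule.span ℂ (Set.range v)) := by
  have h_mem (f : W12) := W12.dbarOp_eq_zero_iff_mem_range_chiralLift g (f := f)
  have h_inj := W12.chiralLift_injective g
  let B : Module.Basis (Fin 4) ℂ (ExteriorPlane ℂ) :=
    (Pi.basisFun ℂ (Finset (Fin 2))).reindex (Fintype.equivFinOfCardEq rfl)
  refine ⟨fun f => ?_, ?_, W12.chiralLift g ∘ B, ?_, fun f => ?_⟩
  · simp only [h_mem, W12.chiralElt_eq_chiralLift]
    refine ⟨?_, fun ⟨c, hc, _⟩ => ⟨_, hc.symm⟩⟩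
    rintro ⟨h, rfl⟩
    refine ⟨ExteriorPlane.ofCoeffs.symm h, by simp, fun c hc => ?_⟩
    exact ExteriorPlane.ofCoeffs.eq_symm_apply.2 (h_inj hc).symm
  · rw [Module.finrank_fintype_fun_eq_card]
    rfl
  · exact B.linearIndependent.map' _ (LinearMap.ker_eq_bot.2 h_inj)
  · rw [h_mem, Set.range_comp, ← Submodule.map_span, B.span_eq, LinearMap.range_eq_map]

end
end

section
/- With the notation of the context, the odd Fourier transform F_odd : ⋀Θ → ⋀T acts on the monomial basis of ⋀Θ as follows (for a, b ∈ {1,2}): F_odd(1) = τ¹∧τ²∧τ̄¹∧τ̄²; F_odd(θ^a) = i·τ^a∧τ̄¹∧τ̄²; F_odd(θ̄^a) = i·τ¹∧τ²∧τ̄^a; F_odd(θ¹∧θ²) = τ̄¹∧τ̄²; F_odd(θ̄¹∧θ̄²) = τ¹∧τ²; F_odd(θ^a∧θ̄^b) = −τ^a∧τ̄^b; F_odd(θ¹∧θ²∧θ̄^a) = i·τ̄^a; F_odd(θ^a∧θ̄¹∧θ̄²) = i·τ^a; F_odd(θ¹∧θ²∧θ̄¹∧θ̄²) = 1. -/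
noncomputable section

/-- Coordinates of the exterior algebra `⋀(ℂ⁸)` with distinguished basis
`τ¹, τ², τ̄¹, τ̄², θ¹, θ², θ̄¹, θ̄²` (indexed `0,…,7`): an element is given by its
coefficients on the basis monomials `e_S` (`S ⊆ {0,…,7}`, factors in increasing index
order). Elements supported on subsets of `{0,1,2,3}` form `⋀T`, and elements supported
on subsets of `{4,5,6,7}` form `⋀Θ`. -/
abbrev Lam8 : Type := Finset (Fin 8) → ℂ

/-- The basis monomial `e_S` of `⋀(ℂ⁸)`. -/
def E8 (S : Finset (Fin 8)) : Lam8 := fun T => if T = S then 1 else 0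

/-- The Koszul sign `(−1)^{#{(a,b) ∈ A×B : b < a}}` with `e_A ∧ e_B = ± e_{A∪B}`. -/
def kz (A B : Finset (Fin 8)) : ℂ := (-1 : ℂ) ^ (∑ a ∈ A, (B.filter (· < a)).card)

/-- The wedge product of `⋀(ℂ⁸)`, in coordinates. -/
def wedge (f g : Lam8) : Lam8 := fun S =>
  ∑ A ∈ S.powerset, kz A (S \ A) * f A * g (S \ A)

/-- The Berezin integral `⋀(ℂ⁸) → ⋀T`: the coefficient of the top monomial
`θ¹∧θ²∧θ̄¹∧θ̄²` in the decomposition `Σ_I α_I ∧ θ_I`, `α_I ∈ ⋀T`. -/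
def Ber (f : Lam8) : Lam8 := fun S =>
  if S ⊆ ({0, 1, 2, 3} : Finset (Fin 8)) then f (S ∪ ({4, 5, 6, 7} : Finset (Fin 8))) else 0

/-- The factor `1 − i·τ¹∧θ² + i·τ²∧θ¹ + τ¹∧τ²∧θ¹∧θ²` of the Fourier kernel. -/
def Kplus : Lam8 :=
  E8 ∅ - Complex.I • E8 {0, 5} + Complex.I • E8 {1, 4} + E8 {0, 1, 4, 5}

/-- The factor `1 − i·τ̄¹∧θ̄² + i·τ̄²∧θ̄¹ + τ̄¹∧τ̄²∧θ̄¹∧θ̄²` of the Fourier kernel. -/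
def Kminus : Lam8 :=
  E8 ∅ - Complex.I • E8 {2, 7} + Complex.I • E8 {3, 6} + E8 {2, 3, 6, 7}

/-- The Fourier kernel `K`, the expansion of `exp(−i(ε₊(τ,θ) + ε₋(τ̄,θ̄)))`. -/
def Kker : Lam8 := wedge Kplus Kminus

/-- The odd Fourier transform `F_odd(a) = Ber(K ∧ a)`. -/
def Fodd (a : Lam8) : Lam8 := Ber (wedge Kker a)

/-- Index of `τ^a`. -/
def tI (a : Fin 2) : Fin 8 := ⟨a.val, by have := a.isLt; omega⟩
/-- Index of `τ̄^a`. -/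
def tbI (a : Fin 2) : Fin 8 := ⟨a.val + 2, by have := a.isLt; omega⟩
/-- Index of `θ^a`. -/
def thI (a : Fin 2) : Fin 8 := ⟨a.val + 4, by have := a.isLt; omega⟩
/-- Index of `θ̄^a`. -/
def thbI (a : Fin 2) : Fin 8 := ⟨a.val + 6, by have := a.isLt; omega⟩

/-!
The kernel splits as `K = K₊ ∧ K₋`, where `K₊` involves only the unbarred variables and `K₋` only
the barred ones. As `K₋` is even it commutes with everything, so for `a` unbarred and `b` barred
`K ∧ (a ∧ b) = (K₊ ∧ a) ∧ (K₋ ∧ b)`. The Berezin integral over the four `θ`s is in turn the product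
of the integrals over the two pairs, again without a sign because a pair is even. Hence
`F_odd(a ∧ b) = F₊(a) ∧ F₋(b)`, and both factors are instances of one transform in two variables,
which sends `1, θ¹, θ², θ¹∧θ²` to `τ¹∧τ², i τ¹, i τ², 1`.
-/

open Finset Function

section KoszulSign

variable {A A' B B' : Finset (Fin 8)}

theorem kz_union_left (h : Disjoint A A') : kz (A ∪ A') B = kz A B * kz A' B := by
  rw [kz, sum_union h, pow_add, kz, kz]

theorem kz_union_right (h : Disjoint B B') : kz A (B ∪ B') = kz A B * kz A B' := by
  simp only [kz, ← pow_add, ← sum_add_distrib, filter_union]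
  congr 1
  exact sum_congr rfl fun a _ => card_union_of_disjoint (disjoint_filter_filter h)

theorem kz_mul_self : kz A B * kz A B = 1 := by
  rw [kz, ← mul_pow, neg_one_mul, neg_neg, one_pow]

theorem kz_eq_one_of_le (h : ∀ a ∈ A, ∀ b ∈ B, a ≤ b) : kz A B = 1 := by
  rw [kz, sum_eq_zero, pow_zero]
  intro a ha
  rw [card_eq_zero, filter_eq_empty_iff]
  exact fun b hb => (h a ha b hb).not_gt

theorem kz_mul_kz_swap (h : Disjoint A B) : kz A B * kz B A = (-1) ^ (#A * #B) := by
  have inversions_swap : ∑ b ∈ B, #{a ∈ A | a < b} = ∑ a ∈ A, #{b ∈ B | a < b} :=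
    (sum_card_bipartiteAbove_eq_sum_card_bipartiteBelow (· < ·)).symm
  have inversions_add (a) (ha : a ∈ A) : #{b ∈ B | b < a} + #{b ∈ B | a < b} = #B := by
    rw [← card_filter_add_card_filter_not (s := B) (· < a)]
    congr 2
    refine filter_congr fun b hb => ?_
    have : a ≠ b := fun hab => disjoint_left.1 h ha (hab ▸ hb)
    exact ⟨fun hab => hab.not_gt, fun hab => lt_of_le_of_ne (not_lt.1 hab) this⟩
  rw [kz, kz, ← pow_add, inversions_swap, ← sum_add_distrib, sum_congr rfl inversions_add,
    sum_const, smul_eq_mul]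

theorem kz_comm_of_even (h : Disjoint A B) (hA : Even #A) : kz A B = kz B A := by
  have hswap : kz A B * kz B A = 1 := by
    rw [kz_mul_kz_swap h, (hA.mul_right _).neg_one_pow]
  calc kz A B = kz A B * (kz B A * kz B A) := by rw [kz_mul_self, mul_one]
    _ = kz B A := by rw [← mul_assoc, hswap, one_mul]

theorem kz_union_mul_kz_union {Ω Ω' : Finset (Fin 8)} (hAΩ : Disjoint A Ω)
    (hBΩ' : Disjoint B Ω') (hAB : Disjoint A B) (hΩΩ' : Disjoint Ω Ω')
    (hΩB : Disjoint Ω B) (heven : Even #Ω) :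
    kz (A ∪ B) (Ω ∪ Ω') * kz (A ∪ Ω) (B ∪ Ω') =
      kz Ω Ω' * (kz A B * kz A Ω * kz B Ω') := by
  rw [kz_union_left hAB, kz_union_left hAΩ]
  simp only [kz_union_right hΩΩ', kz_union_right hBΩ']
  rw [kz_comm_of_even hΩB heven]
  linear_combination (kz A Ω * kz B Ω' * kz A B * kz Ω Ω') *
    (kz B Ω * kz B Ω * kz_mul_self (A := A) (B := Ω') + kz_mul_self (A := B) (B := Ω))

end KoszulSign

section Wedge

/-- The wedge product as a bilinear map, so that expansions can use the `map_add`, `map_smul`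
lemmas. -/
def wedgeBilin : Lam8 →ₗ[ℂ] Lam8 →ₗ[ℂ] Lam8 :=
  LinearMap.mk₂ ℂ wedge
    (fun f f' g => by ext S; simp [wedge, mul_add, add_mul, sum_add_distrib])
    (fun c f g => by
      ext S
      simp only [wedge, Pi.smul_apply, smul_eq_mul, mul_sum]
      exact sum_congr rfl fun _ _ => by ring)
    (fun f g g' => by ext S; simp [wedge, mul_add, sum_add_distrib])
    (fun c f g => by
      ext S
      simp only [wedge, Pi.smul_apply, smul_eq_mul, mul_sum]
      exact sum_congr rfl fun _ _ => by ring)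

variable {f g : Lam8} {A B P Q : Finset (Fin 8)}

theorem support_E8_subset (S : Finset (Fin 8)) : support (E8 S) ⊆ {S} := by
  intro T hT
  by_contra h
  exact hT (if_neg h)

theorem support_E8_subset_Iic (h : A ⊆ P) : support (E8 A) ⊆ Set.Iic P :=
  (support_E8_subset A).trans (Set.singleton_subset_iff.2 h)

theorem wedge_assoc (f g h : Lam8) : wedge (wedge f g) h = wedge f (wedge g h) := by
  ext S
  simp only [wedge, mul_sum, sum_mul, sum_sigma']
  refine sum_bij' (fun x _ => ⟨x.2, x.1 \ x.2⟩) (fun x _ => ⟨x.1 ∪ x.2, x.1⟩) ?_ ?_ ?_ ?_ ?_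
  all_goals simp only [mem_sigma, mem_powerset, and_imp, Sigma.forall]
  · exact fun A B hA hB => ⟨hB.trans hA, sdiff_subset_sdiff hA le_rfl⟩
  · exact fun A B hA hB => ⟨union_subset hA (hB.trans sdiff_subset), subset_union_left⟩
  · intro A B _ hB
    rw [union_sdiff_of_subset hB]
  · intro A B _ hB
    rw [union_sdiff_cancel_left (disjoint_sdiff.mono_right hB)]
  · intro A B hA hB
    have hcompl : S \ B = A \ B ∪ S \ A := by grind
    have hrest : (S \ B) \ (A \ B) = S \ A := by grind
    have hdisj : Disjoint (A \ B) (S \ A) := disjoint_sdiff.mono_left sdiff_subset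
    have hleft : kz A (S \ A) = kz B (S \ A) * kz (A \ B) (S \ A) := by
      rw [← kz_union_left disjoint_sdiff, union_sdiff_of_subset hB]
    rw [hrest, hleft, hcompl, kz_union_right hdisj]
    ring

theorem wedge_comm_of_even (hf : ∀ S ∈ support f, Even #S) (g : Lam8) :
    wedge f g = wedge g f := by
  ext S
  refine sum_bij' (fun A _ => S \ A) (fun A _ => S \ A) ?_ ?_ ?_ ?_ ?_
  all_goals simp only [mem_powerset]
  · exact fun _ _ => sdiff_subset
  · exact fun _ _ => sdiff_subset
  · exact fun _ => Finset.sdiff_sdiff_eq_self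
  · exact fun _ => Finset.sdiff_sdiff_eq_self
  · intro A hA
    rw [Finset.sdiff_sdiff_eq_self hA]
    by_cases hfA : f A = 0
    · simp [hfA]
    · rw [kz_comm_of_even disjoint_sdiff (hf A hfA)]
      ring

theorem wedge_wedge_wedge_comm_of_even (hg : ∀ S ∈ support g, Even #S) (f a b : Lam8) :
    wedge (wedge f g) (wedge a b) = wedge (wedge f a) (wedge g b) := by
  rw [wedge_assoc, ← wedge_assoc g, wedge_comm_of_even hg, wedge_assoc a, ← wedge_assoc f]

theorem support_wedge_subset (hf : support f ⊆ Set.Iic P) (hg : support g ⊆ Set.Iic P) :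
    support (wedge f g) ⊆ Set.Iic P := by
  intro S hS
  obtain ⟨A, hA, hne⟩ := exists_ne_zero_of_sum_ne_zero hS
  have hAP : A ⊆ P := hf (right_ne_zero_of_mul (left_ne_zero_of_mul hne))
  have hSAP : S \ A ⊆ P := hg (right_ne_zero_of_mul hne)
  rw [← union_sdiff_of_subset (mem_powerset.1 hA)]
  exact union_subset hAP hSAP

theorem wedge_apply_of_disjoint_support (hf : support f ⊆ Set.Iic P)
    (hg : support g ⊆ Set.Iic Q) (hPQ : Disjoint P Q) (S : Finset (Fin 8)) :
    wedge f g S =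
      if S ⊆ P ∪ Q then kz (S ∩ P) (S ∩ Q) * f (S ∩ P) * g (S ∩ Q) else 0 := by
  have eq_inter (A) (hA : A ⊆ S) (hne : kz A (S \ A) * f A * g (S \ A) ≠ 0) :
      A = S ∩ P ∧ S \ A = S ∩ Q := by
    have hAP : A ⊆ P := hf (right_ne_zero_of_mul (left_ne_zero_of_mul hne))
    have hAQ : S \ A ⊆ Q := hg (right_ne_zero_of_mul hne)
    rw [disjoint_left] at hPQ
    grind
  split_ifs with hS
  · have hsdiff : S \ (S ∩ P) = S ∩ Q := by
      rw [disjoint_left] at hPQ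
      grind
    rw [wedge, sum_eq_single (S ∩ P), hsdiff]
    · intro A hA hAP
      by_contra hne
      exact hAP (eq_inter A (mem_powerset.1 hA) hne).1
    · exact fun h => absurd (mem_powerset.2 inter_subset_left) h
  · refine sum_eq_zero fun A hA => ?_
    by_contra hne
    obtain ⟨hAP, hAQ⟩ := eq_inter A (mem_powerset.1 hA) hne
    refine hS ?_
    rw [← union_sdiff_of_subset (mem_powerset.1 hA), hAQ, hAP]
    exact union_subset_union inter_subset_right inter_subset_right

theorem wedge_E8_of_disjoint (h : Disjoint A B) :
    wedge (E8 A) (E8 B) = kz A B • E8 (A ∪ B) := by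
  ext S
  rw [wedge_apply_of_disjoint_support (support_E8_subset_Iic le_rfl)
    (support_E8_subset_Iic le_rfl) h]
  have hS : S ⊆ A ∪ B ∧ S ∩ A = A ∧ S ∩ B = B ↔ S = A ∪ B := by grind
  by_cases hSAB : S = A ∪ B
  · obtain ⟨hsub, hA, hB⟩ := hS.2 hSAB
    rw [if_pos hsub, hA, hB]
    simp [E8, hSAB]
  · simp only [E8, Pi.smul_apply, if_neg hSAB, smul_zero]
    grind

theorem wedge_E8_of_not_disjoint (h : ¬Disjoint A B) : wedge (E8 A) (E8 B) = 0 := by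
  ext S
  refine sum_eq_zero fun C _ => ?_
  by_contra hne
  have hC : C = A := support_E8_subset A (right_ne_zero_of_mul (left_ne_zero_of_mul hne))
  have hSC : S \ C = B := support_E8_subset B (right_ne_zero_of_mul hne)
  exact h (hC ▸ hSC ▸ disjoint_sdiff)

theorem wedge_E8_of_lt (h : ∀ a ∈ A, ∀ b ∈ B, a < b) :
    wedge (E8 A) (E8 B) = E8 (A ∪ B) := by
  have hdisj : Disjoint A B := disjoint_left.2 fun a ha hb => (h a ha a hb).false
  rw [wedge_E8_of_disjoint hdisj, kz_eq_one_of_le fun a ha b hb => (h a ha b hb).le, one_smul]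

theorem wedge_smul_smul (c d : ℂ) (f g : Lam8) :
    wedge (c • f) (d • g) = (c * d) • wedge f g := by
  change wedgeBilin (c • f) (d • g) = (c * d) • wedgeBilin f g
  rw [LinearMap.map_smul₂, map_smul, smul_smul]

end Wedge

section Berezin

/-- The Grassmann–Berezin integral over the generators indexed by `Ω`: the coefficient `α` of
`α ∧ e_Ω`, with `Ω` written on the right, whence the sign `kz T Ω`. -/
def berezin (Ω : Finset (Fin 8)) : Lam8 →ₗ[ℂ] Lam8 where
  toFun f := fun T => if Disjoint T Ω then kz T Ω * f (T ∪ Ω) else 0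
  map_add' f g := by
    ext T
    simp only [Pi.add_apply, mul_add]
    split_ifs <;> simp
  map_smul' c f := by
    ext T
    simp only [Pi.smul_apply, smul_eq_mul, RingHom.id_apply]
    split_ifs <;> ring

variable {f g : Lam8} {A B C P Q Ω Ω' : Finset (Fin 8)}

theorem berezin_apply (Ω : Finset (Fin 8)) (f : Lam8) (T : Finset (Fin 8)) :
    berezin Ω f T = if Disjoint T Ω then kz T Ω * f (T ∪ Ω) else 0 :=
  rfl

theorem Ber_eq_berezin (f : Lam8) : Ber f = berezin {4, 5, 6, 7} f := by
  ext T
  have hdisj : T ⊆ {0, 1, 2, 3} ↔ Disjoint T {4, 5, 6, 7} := by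
    rw [show ({0, 1, 2, 3} : Finset (Fin 8)) = {4, 5, 6, 7}ᶜ by decide]
    exact le_compl_iff_disjoint_right
  have hle : ∀ a ∈ ({0, 1, 2, 3} : Finset (Fin 8)), ∀ b ∈ ({4, 5, 6, 7} : Finset (Fin 8)),
      a ≤ b := by decide
  simp only [Ber, berezin_apply, ← hdisj]
  split_ifs with hT
  · rw [kz_eq_one_of_le fun a ha => hle a (hT ha), one_mul]
  · rfl

theorem support_berezin_subset (hf : support f ⊆ Set.Iic P) :
    support (berezin Ω f) ⊆ Set.Iic P := by
  intro T hT
  have hne : f (T ∪ Ω) ≠ 0 := right_ne_zero_of_mul (ite_ne_right_iff.1 hT).2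
  exact subset_union_left.trans (hf hne)

theorem berezin_wedge (hf : support f ⊆ Set.Iic P) (hg : support g ⊆ Set.Iic Q)
    (hPQ : Disjoint P Q) (hΩ : Ω ⊆ P) (hΩ' : Ω' ⊆ Q) (heven : Even #Ω) :
    berezin (Ω ∪ Ω') (wedge f g) = kz Ω Ω' • wedge (berezin Ω f) (berezin Ω' g) := by
  ext T
  rw [Pi.smul_apply, wedge_apply_of_disjoint_support (support_berezin_subset hf)
    (support_berezin_subset hg) hPQ]
  simp only [berezin_apply, wedge_apply_of_disjoint_support hf hg hPQ]
  have hPQ' := disjoint_left.1 hPQ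
  have hsub : T ∪ (Ω ∪ Ω') ⊆ P ∪ Q ↔ T ⊆ P ∪ Q := by grind
  have hP : (T ∪ (Ω ∪ Ω')) ∩ P = T ∩ P ∪ Ω := by grind
  have hQ : (T ∪ (Ω ∪ Ω')) ∩ Q = T ∩ Q ∪ Ω' := by grind
  rw [hP, hQ]
  by_cases hT : T ⊆ P ∪ Q
  · have hdisj : Disjoint T (Ω ∪ Ω') ↔ Disjoint (T ∩ P) Ω ∧ Disjoint (T ∩ Q) Ω' := by
      simp only [disjoint_left]
      grind
    by_cases hTΩ : Disjoint T (Ω ∪ Ω')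
    · obtain ⟨hTP, hTQ⟩ := hdisj.1 hTΩ
      have hsign := kz_union_mul_kz_union hTP hTQ
        (hPQ.mono inter_subset_right inter_subset_right) (hPQ.mono hΩ hΩ')
        (hPQ.mono hΩ inter_subset_right) heven
      rw [← inter_union_distrib_left, inter_eq_left.2 hT] at hsign
      simp only [if_pos hTΩ, if_pos (hsub.2 hT), if_pos hT, if_pos hTP, if_pos hTQ, smul_eq_mul]
      linear_combination (f (T ∩ P ∪ Ω) * g (T ∩ Q ∪ Ω')) * hsign
    · rw [if_neg hTΩ]
      rcases not_and_or.1 (mt hdisj.2 hTΩ) with h | h <;> simp [h]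
  · simp [hT, hsub]

theorem berezin_E8_union (h : Disjoint A Ω) : berezin Ω (E8 (A ∪ Ω)) = kz A Ω • E8 A := by
  ext T
  simp only [berezin_apply, E8, Pi.smul_apply, smul_eq_mul]
  have hT : Disjoint T Ω ∧ T ∪ Ω = A ∪ Ω ↔ T = A := by
    refine ⟨fun ⟨hTΩ, hunion⟩ => ?_, by rintro rfl; exact ⟨h, rfl⟩⟩
    rw [← union_sdiff_cancel_right hTΩ, hunion, union_sdiff_cancel_right h]
  grind

theorem berezin_E8_of_not_subset (h : ¬Ω ⊆ A) : berezin Ω (E8 A) = 0 := by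
  ext T
  have hT : T ∪ Ω ≠ A := fun hTA => h (hTA ▸ subset_union_right)
  simp [berezin_apply, E8, hT]

theorem berezin_wedge_E8 (hAB : Disjoint A B) (hC : Disjoint C Ω) (h : A ∪ B = C ∪ Ω) :
    berezin Ω (wedge (E8 A) (E8 B)) = (kz A B * kz C Ω) • E8 C := by
  rw [wedge_E8_of_disjoint hAB, map_smul, h, berezin_E8_union hC, smul_smul]

theorem berezin_wedge_E8_eq_zero {i : Fin 8} (hi : i ∈ Ω) (h : i ∈ A ↔ i ∈ B) :
    berezin Ω (wedge (E8 A) (E8 B)) = 0 := by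
  by_cases hA : i ∈ A
  · rw [wedge_E8_of_not_disjoint fun hAB => disjoint_left.1 hAB hA (h.1 hA), map_zero]
  · have hΩ : ¬Ω ⊆ A ∪ B := fun hΩ => (mem_union.1 (hΩ hi)).elim hA (mt h.2 hA)
    by_cases hAB : Disjoint A B
    · rw [wedge_E8_of_disjoint hAB, map_smul, berezin_E8_of_not_subset hΩ, smul_zero]
    · rw [wedge_E8_of_not_disjoint hAB, map_zero]

end Berezin

section SpinorFourier

/-- The Fourier kernel of one chirality, the expansion of `exp(-i(e_p ∧ e_s - e_q ∧ e_r))` for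
`p < q < r < s`: the indices `p, q` stand for `τ¹, τ²` and `r, s` for `θ¹, θ²`, or for their barred
versions. -/
def spinorKernel (p q r s : Fin 8) : Lam8 :=
  E8 ∅ - Complex.I • E8 {p, s} + Complex.I • E8 {q, r} + E8 {p, q, r, s}

/-- The odd Fourier transform of one chirality, from the variables `r, s` to `p, q`. -/
def spinorFourier (p q r s : Fin 8) (a : Lam8) : Lam8 :=
  berezin {r, s} (wedge (spinorKernel p q r s) a)

variable {p q r s : Fin 8}

theorem support_spinorKernel_subset :
    support (spinorKernel p q r s) ⊆ {∅, {p, s}, {q, r}, {p, q, r, s}} := by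
  intro S hS
  by_contra h
  simp only [Set.mem_insert_iff, Set.mem_singleton_iff, not_or] at h
  simp [spinorKernel, E8, h] at hS

theorem support_spinorKernel_subset_Iic :
    support (spinorKernel p q r s) ⊆ Set.Iic {p, q, r, s} := by
  intro S hS
  rcases support_spinorKernel_subset hS with rfl | rfl | rfl | rfl <;> grind

theorem spinorFourier_eq (a : Lam8) :
    spinorFourier p q r s a =
      berezin {r, s} (wedge (E8 ∅) a) - Complex.I • berezin {r, s} (wedge (E8 {p, s}) a)
        + Complex.I • berezin {r, s} (wedge (E8 {q, r}) a)
        + berezin {r, s} (wedge (E8 {p, q, r, s}) a) := by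
  have hwedge (f : Lam8) : wedge f a = wedgeBilin.flip a f := rfl
  simp only [spinorFourier, spinorKernel, hwedge, map_add, map_sub, map_smul]

theorem spinorFourier_E8_empty (hpr : p < r) (hqr : q < r) (hrs : r < s) :
    spinorFourier p q r s (E8 ∅) = E8 {p, q} := by
  have hC : ∀ a ∈ ({p, q} : Finset (Fin 8)), ∀ b ∈ ({r, s} : Finset (Fin 8)), a ≤ b := by grind
  rw [spinorFourier_eq,
    berezin_wedge_E8_eq_zero (A := ∅) (i := r) (by simp) (by grind),
    berezin_wedge_E8_eq_zero (A := {p, s}) (i := r) (by simp) (by grind),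
    berezin_wedge_E8_eq_zero (A := {q, r}) (i := s) (by simp) (by grind),
    berezin_wedge_E8 (A := {p, q, r, s}) (C := {p, q})
      (by simp) (by grind [disjoint_left]) (by grind),
    kz_eq_one_of_le (B := ∅) (by simp), kz_eq_one_of_le hC]
  module

theorem spinorFourier_E8_left (hpr : p < r) (hrs : r < s) :
    spinorFourier p q r s (E8 {r}) = Complex.I • E8 {p} := by
  have hsign : kz {p, s} {r} = -1 := by
    simp [kz, sum_pair (hpr.trans hrs).ne, filter_singleton, hrs, hpr.not_gt]
  rw [spinorFourier_eq,
    berezin_wedge_E8_eq_zero (A := ∅) (i := s) (by simp) (by grind),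
    berezin_wedge_E8 (A := {p, s}) (C := {p})
      (by grind [disjoint_left]) (by grind [disjoint_left]) (by grind),
    berezin_wedge_E8_eq_zero (A := {q, r}) (i := r) (by simp) (by grind),
    berezin_wedge_E8_eq_zero (A := {p, q, r, s}) (i := r) (by simp) (by grind),
    hsign, kz_eq_one_of_le (A := {p}) (by grind)]
  module

theorem spinorFourier_E8_right (hqr : q < r) (hrs : r < s) :
    spinorFourier p q r s (E8 {s}) = Complex.I • E8 {q} := by
  rw [spinorFourier_eq,
    berezin_wedge_E8_eq_zero (A := ∅) (i := r) (by simp) (by grind),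
    berezin_wedge_E8_eq_zero (A := {p, s}) (i := s) (by simp) (by grind),
    berezin_wedge_E8 (A := {q, r}) (C := {q})
      (by grind [disjoint_left]) (by grind [disjoint_left]) (by grind),
    berezin_wedge_E8_eq_zero (A := {p, q, r, s}) (i := s) (by simp) (by grind),
    kz_eq_one_of_le (A := {q, r}) (by grind), kz_eq_one_of_le (A := {q}) (by grind)]
  module

theorem spinorFourier_E8_pair : spinorFourier p q r s (E8 {r, s}) = E8 ∅ := by
  rw [spinorFourier_eq,
    berezin_wedge_E8 (A := ∅) (C := ∅) (by simp) (by simp) (by simp),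
    berezin_wedge_E8_eq_zero (A := {p, s}) (i := s) (by simp) (by grind),
    berezin_wedge_E8_eq_zero (A := {q, r}) (i := r) (by simp) (by grind),
    berezin_wedge_E8_eq_zero (A := {p, q, r, s}) (i := r) (by simp) (by grind),
    kz_eq_one_of_le (A := ∅) (by simp)]
  module

end SpinorFourier

section OddFourier

theorem Fodd_wedge {f g : Lam8} (hf : support f ⊆ Set.Iic {0, 1, 4, 5})
    (hg : support g ⊆ Set.Iic {2, 3, 6, 7}) :
    Fodd (wedge f g) = wedge (spinorFourier 0 1 4 5 f) (spinorFourier 2 3 6 7 g) := by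
  have hKplus : support Kplus ⊆ Set.Iic {0, 1, 4, 5} := support_spinorKernel_subset_Iic
  have hKminus : support Kminus ⊆ Set.Iic {2, 3, 6, 7} := support_spinorKernel_subset_Iic
  have hKminus_even : ∀ S ∈ support Kminus, Even #S := by
    intro S hS
    rcases support_spinorKernel_subset hS with rfl | rfl | rfl | rfl <;> decide
  have hsign : kz {4, 5} {6, 7} = 1 := kz_eq_one_of_le (by decide)
  calc Fodd (wedge f g)
      = berezin ({4, 5} ∪ {6, 7}) (wedge (wedge Kplus f) (wedge Kminus g)) := by
        rw [Fodd, Kker, wedge_wedge_wedge_comm_of_even hKminus_even, Ber_eq_berezin]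
        rfl
    _ = kz {4, 5} {6, 7} • wedge (berezin {4, 5} (wedge Kplus f))
          (berezin {6, 7} (wedge Kminus g)) :=
        berezin_wedge (support_wedge_subset hKplus hf) (support_wedge_subset hKminus hg)
          (by decide) (by decide) (by decide) (by decide)
    _ = wedge (spinorFourier 0 1 4 5 f) (spinorFourier 2 3 6 7 g) := by
        rw [hsign, one_smul]
        rfl

theorem Fodd_E8_union {A B C D : Finset (Fin 8)} {c d : ℂ}
    (hAC : spinorFourier 0 1 4 5 (E8 A) = c • E8 C)
    (hBD : spinorFourier 2 3 6 7 (E8 B) = d • E8 D)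
    (hA : A ⊆ {4, 5} := by decide +revert) (hB : B ⊆ {6, 7} := by decide +revert)
    (hC : C ⊆ {0, 1} := by decide +revert) (hD : D ⊆ {2, 3} := by decide +revert) :
    Fodd (E8 (A ∪ B)) = (c * d) • E8 (C ∪ D) := by
  have lt_of_theta : ∀ a ∈ ({4, 5} : Finset (Fin 8)), ∀ b ∈ ({6, 7} : Finset (Fin 8)), a < b := by
    decide
  have lt_of_tau : ∀ a ∈ ({0, 1} : Finset (Fin 8)), ∀ b ∈ ({2, 3} : Finset (Fin 8)), a < b := by
    decide
  rw [← wedge_E8_of_lt fun a ha b hb => lt_of_theta a (hA ha) b (hB hb),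
    Fodd_wedge (support_E8_subset_Iic (hA.trans (by decide)))
      (support_E8_subset_Iic (hB.trans (by decide))),
    hAC, hBD, wedge_smul_smul, wedge_E8_of_lt fun a ha b hb => lt_of_tau a (hC ha) b (hD hb)]

theorem spinorFourier_E8_thI (a : Fin 2) :
    spinorFourier 0 1 4 5 (E8 {thI a}) = Complex.I • E8 {tI a} := by
  fin_cases a
  · exact spinorFourier_E8_left (by decide) (by decide)
  · exact spinorFourier_E8_right (by decide) (by decide)

theorem spinorFourier_E8_thbI (a : Fin 2) :
    spinorFourier 2 3 6 7 (E8 {thbI a}) = Complex.I • E8 {tbI a} := by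
  fin_cases a
  · exact spinorFourier_E8_left (by decide) (by decide)
  · exact spinorFourier_E8_right (by decide) (by decide)

end OddFourier

/-- the values of the odd Fourier transform `F_odd : ⋀Θ → ⋀T` on the sixteen
monomials of `⋀Θ` (`a, b ∈ {1,2}`): `F_odd(1) = τ¹∧τ²∧τ̄¹∧τ̄²`, `F_odd(θ^a) = i·τ^a∧τ̄¹∧τ̄²`,
`F_odd(θ̄^a) = i·τ¹∧τ²∧τ̄^a`, `F_odd(θ¹∧θ²) = τ̄¹∧τ̄²`, `F_odd(θ̄¹∧θ̄²) = τ¹∧τ²`,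
`F_odd(θ^a∧θ̄^b) = −τ^a∧τ̄^b`, `F_odd(θ¹∧θ²∧θ̄^a) = i·τ̄^a`, `F_odd(θ^a∧θ̄¹∧θ̄²) = i·τ^a`,
`F_odd(θ¹∧θ²∧θ̄¹∧θ̄²) = 1`. -/
theorem stmt13 :
    Fodd (E8 ∅) = E8 {0, 1, 2, 3} ∧
    (∀ a : Fin 2, Fodd (E8 {thI a}) = Complex.I • E8 {tI a, 2, 3}) ∧
    (∀ a : Fin 2, Fodd (E8 {thbI a}) = Complex.I • E8 {0, 1, tbI a}) ∧
    Fodd (E8 {4, 5}) = E8 {2, 3} ∧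
    Fodd (E8 {6, 7}) = E8 {0, 1} ∧
    (∀ a b : Fin 2, Fodd (E8 {thI a, thbI b}) = -(E8 {tI a, tbI b})) ∧
    (∀ a : Fin 2, Fodd (E8 {4, 5, thbI a}) = Complex.I • E8 {tbI a}) ∧
    (∀ a : Fin 2, Fodd (E8 {thI a, 6, 7}) = Complex.I • E8 {tI a}) ∧
    Fodd (E8 {4, 5, 6, 7}) = E8 ∅ := by
  have scalar : spinorFourier 0 1 4 5 (E8 ∅) = (1 : ℂ) • E8 {0, 1} := by
    rw [one_smul, spinorFourier_E8_empty] <;> decide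
  have scalar_bar : spinorFourier 2 3 6 7 (E8 ∅) = (1 : ℂ) • E8 {2, 3} := by
    rw [one_smul, spinorFourier_E8_empty] <;> decide
  have top : spinorFourier 0 1 4 5 (E8 {4, 5}) = (1 : ℂ) • E8 ∅ := by
    rw [one_smul, spinorFourier_E8_pair]
  have top_bar : spinorFourier 2 3 6 7 (E8 {6, 7}) = (1 : ℂ) • E8 ∅ := by
    rw [one_smul, spinorFourier_E8_pair]
  have theta := spinorFourier_E8_thI
  have theta_bar := spinorFourier_E8_thbI
  refine ⟨?_, fun a => ?_, fun a => ?_, ?_, ?_, fun a b => ?_, fun a => ?_, fun a => ?_, ?_⟩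
  · simpa [-union_insert] using Fodd_E8_union scalar scalar_bar
  · simpa [-union_insert] using Fodd_E8_union (theta a) scalar_bar
  · simpa [-union_singleton] using Fodd_E8_union scalar (theta_bar a)
  · simpa using Fodd_E8_union top scalar_bar
  · simpa using Fodd_E8_union scalar top_bar
  · simpa [-union_singleton] using Fodd_E8_union (theta a) (theta_bar b)
  · simpa [-union_singleton] using Fodd_E8_union top (theta_bar a)
  · simpa [-union_insert] using Fodd_E8_union (theta a) top_bar
  · simpa [-union_insert] using Fodd_E8_union top top_bar

end
end
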